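/- For the uncertain discrete-time descriptor model, if Q_N⁺Q_N ℓ = ℓ, then the minimax a posteriori error equals σ̂(ℓ, N) = [1 − α_N + (Q_N⁺ r_N, r_N)]^{1/2} · (Q_N⁺ ℓ, ℓ)^{1/2}, and the minimax a posteriori estimation of (ℓ, x_N) is (ℓ, Q_N⁺ r_N), i.e. a = (ℓ, Q_N⁺ r_N) attains inf_{a∈ℝ} sup_{𝓖_y} |(ℓ, x_N) − a|. -/

import Mathlib

/-! The constraint functional is a sum of quadratic costs, and minimising it over `x_0, …, x_{N-1}`
with `x_N = z` fixed is a dynamic programming problem whose value function is the quadratic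
polynomial `V_N z = (Q_N z, z) - 2 (r_N, z) + α_N` (`value_le_cost`, `exists_cost_eq_value`). The
induction step completes the square in `x_k`: the cost to be minimised is
`(P_k x, x) - 2 (b, x) + const` with `b = r_k + C_k' S_k F_{k+1} z`. As a sum of nonnegative costs it
is bounded below, which forces `P_k` to be positive semidefinite and `b` to lie in the range of
`P_k` (`bounded_below_range`), so the minimiser is `P_k⁺ b`; expanding `(P_k⁺ b, b)` gives the
recursions for `Q`, `r` and `α` (`step_identity`).

Since `V_N ≥ 0`, the same argument gives
`V_N z = (Q_N (z - ẑ), z - ẑ) + α_N - (Q_N⁺ r_N, r_N)` with `ẑ = Q_N⁺ r_N`. Thus the possible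
`x_N` form the ellipsoidal cylinder `(Q_N (z - ẑ), z - ẑ) ≤ c`, with
`c = 1 - α_N + (Q_N⁺ r_N, r_N) ≥ 0`. By Cauchy–Schwarz for the form `Q_N`, `(ℓ, x_N)` deviates from
`(ℓ, ẑ)` by at most `√c √(Q_N⁺ ℓ, ℓ)`, with both signs attained at `ẑ ± t Q_N⁺ ℓ`; a symmetric
interval is best approximated by its midpoint. -/

open Matrix
open scoped ENNReal RealInnerProductSpace

/-- `B` is the Moore–Penrose pseudoinverse of `A`. -/
def IsMoorePenrose {ι κ : Type*} [Fintype ι] [Fintype κ]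
    (A : Matrix ι κ ℝ) (B : Matrix κ ι ℝ) : Prop :=
  A * B * A = A ∧ B * A * B = B ∧ (A * B)ᵀ = A * B ∧ (B * A)ᵀ = B * A

/-- The Moore–Penrose pseudoinverse `A⁺` (it exists, and is unique, for every
real matrix). -/
noncomputable def pinv {ι κ : Type*} [Fintype ι] [Fintype κ]
    (A : Matrix ι κ ℝ) : Matrix κ ι ℝ :=
  haveI := Classical.propDecidable (∃ B, IsMoorePenrose A B)
  if h : ∃ B, IsMoorePenrose A B then h.choose else 0

/-- The linear map on Euclidean spaces induced by a matrix. -/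
noncomputable def matVec {ι κ : Type*} [Fintype ι] [Fintype κ] [DecidableEq κ]
    (A : Matrix ι κ ℝ) (v : EuclideanSpace ℝ κ) : EuclideanSpace ℝ ι :=
  Matrix.toEuclideanLin A v

/-- The recursively defined matrices `Q_k`:
`Q_0 = F₀'SF₀ + H₀'R₀H₀`,
`Q_{k+1} = H_{k+1}'R_{k+1}H_{k+1} + F_{k+1}'[S_k − S_kC_kP_k⁺C_k'S_k]F_{k+1}`,
with `P_k = Q_k + C_k'S_kC_k`. -/
noncomputable def Qmat {m n p : ℕ} (F C : ℕ → Matrix (Fin m) (Fin n) ℝ)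
    (Hm : ℕ → Matrix (Fin p) (Fin n) ℝ) (S0 : Matrix (Fin m) (Fin m) ℝ)
    (S : ℕ → Matrix (Fin m) (Fin m) ℝ) (R : ℕ → Matrix (Fin p) (Fin p) ℝ) :
    ℕ → Matrix (Fin n) (Fin n) ℝ
  | 0 => (F 0)ᵀ * S0 * F 0 + (Hm 0)ᵀ * R 0 * Hm 0
  | (k+1) => (Hm (k+1))ᵀ * R (k+1) * Hm (k+1) +
      (F (k+1))ᵀ * (S k - S k * C k *
          pinv (Qmat F C Hm S0 S R k + (C k)ᵀ * S k * C k) * (C k)ᵀ * S k) *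
        F (k+1)

/-- The matrices `P_k = Q_k + C_k'S_kC_k`. -/
noncomputable def Pmat {m n p : ℕ} (F C : ℕ → Matrix (Fin m) (Fin n) ℝ)
    (Hm : ℕ → Matrix (Fin p) (Fin n) ℝ) (S0 : Matrix (Fin m) (Fin m) ℝ)
    (S : ℕ → Matrix (Fin m) (Fin m) ℝ) (R : ℕ → Matrix (Fin p) (Fin p) ℝ)
    (k : ℕ) : Matrix (Fin n) (Fin n) ℝ :=
  Qmat F C Hm S0 S R k + (C k)ᵀ * S k * C k

/-- The recursively defined vectors `r_k`:
`r_0 = H₀'R₀y₀`, `r_{k+1} = F_{k+1}'S_kC_kP_k⁺ r_k + H_{k+1}'R_{k+1}y_{k+1}`. -/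
noncomputable def rvec {m n p : ℕ} (F C : ℕ → Matrix (Fin m) (Fin n) ℝ)
    (Hm : ℕ → Matrix (Fin p) (Fin n) ℝ) (S0 : Matrix (Fin m) (Fin m) ℝ)
    (S : ℕ → Matrix (Fin m) (Fin m) ℝ) (R : ℕ → Matrix (Fin p) (Fin p) ℝ)
    (y : ℕ → EuclideanSpace ℝ (Fin p)) :
    ℕ → EuclideanSpace ℝ (Fin n)
  | 0 => matVec ((Hm 0)ᵀ * R 0) (y 0)
  | (k+1) => matVec ((F (k+1))ᵀ * S k * C k * pinv (Pmat F C Hm S0 S R k))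
        (rvec F C Hm S0 S R y k) +
      matVec ((Hm (k+1))ᵀ * R (k+1)) (y (k+1))

/-- The recursively defined numbers `α_k`:
`α_0 = (R₀y₀, y₀)`,
`α_{k+1} = α_k + (R_{k+1}y_{k+1}, y_{k+1}) − (P_k⁺ r_k, r_k)`. -/
noncomputable def alphaNum {m n p : ℕ} (F C : ℕ → Matrix (Fin m) (Fin n) ℝ)
    (Hm : ℕ → Matrix (Fin p) (Fin n) ℝ) (S0 : Matrix (Fin m) (Fin m) ℝ)
    (S : ℕ → Matrix (Fin m) (Fin m) ℝ) (R : ℕ → Matrix (Fin p) (Fin p) ℝ)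
    (y : ℕ → EuclideanSpace ℝ (Fin p)) : ℕ → ℝ
  | 0 => ⟪matVec (R 0) (y 0), y 0⟫
  | (k+1) => alphaNum F C Hm S0 S R y k +
      ⟪matVec (R (k+1)) (y (k+1)), y (k+1)⟫ -
      ⟪matVec (pinv (Pmat F C Hm S0 S R k)) (rvec F C Hm S0 S R y k),
        rvec F C Hm S0 S R y k⟫

/-- The a posteriori set `𝓖_y`: sequences `(x_0, …, x_N)` consistent with the
model `F_{k+1}x_{k+1} − C_kx_k = f_k`, `F₀x₀ = q`, `y_k = H_kx_k + g_k` and the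
constraint `(Sq,q) + Σ_{i<N}(S_if_i,f_i) + Σ_{i≤N}(R_ig_i,g_i) ≤ 1`. -/
def GySeq {m n p : ℕ} (F C : ℕ → Matrix (Fin m) (Fin n) ℝ)
    (Hm : ℕ → Matrix (Fin p) (Fin n) ℝ) (S0 : Matrix (Fin m) (Fin m) ℝ)
    (S : ℕ → Matrix (Fin m) (Fin m) ℝ) (R : ℕ → Matrix (Fin p) (Fin p) ℝ)
    (y : ℕ → EuclideanSpace ℝ (Fin p)) (N : ℕ) :
    Set (ℕ → EuclideanSpace ℝ (Fin n)) :=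
  {x | ⟪matVec S0 (matVec (F 0) (x 0)), matVec (F 0) (x 0)⟫ +
      (∑ i ∈ Finset.range N,
        ⟪matVec (S i) (matVec (F (i+1)) (x (i+1)) - matVec (C i) (x i)),
          matVec (F (i+1)) (x (i+1)) - matVec (C i) (x i)⟫) +
      (∑ i ∈ Finset.range (N+1),
        ⟪matVec (R i) (y i - matVec (Hm i) (x i)),
          y i - matVec (Hm i) (x i)⟫) ≤ 1}

/-- The minimax a posteriori error
`σ̂(ℓ, N) = inf_a sup_{x ∈ 𝓖_y} |(ℓ, x_N) − a|`. -/
noncomputable def sigmaHatSeq {m n p : ℕ} (F C : ℕ → Matrix (Fin m) (Fin n) ℝ)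
    (Hm : ℕ → Matrix (Fin p) (Fin n) ℝ) (S0 : Matrix (Fin m) (Fin m) ℝ)
    (S : ℕ → Matrix (Fin m) (Fin m) ℝ) (R : ℕ → Matrix (Fin p) (Fin p) ℝ)
    (y : ℕ → EuclideanSpace ℝ (Fin p)) (N : ℕ)
    (ℓ : EuclideanSpace ℝ (Fin n)) : ℝ≥0∞ :=
  ⨅ (a : ℝ), ⨆ (x : ℕ → EuclideanSpace ℝ (Fin n))
      (_ : x ∈ GySeq F C Hm S0 S R y N),
    ENNReal.ofReal |⟪ℓ, x N⟫ - a|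

/-! ### Moore–Penrose inverses of symmetric matrices -/

lemma IsMoorePenrose.unique {ι κ : Type*} [Fintype ι] [Fintype κ]
    {A : Matrix ι κ ℝ} {B D : Matrix κ ι ℝ} (hB : IsMoorePenrose A B) (hD : IsMoorePenrose A D) :
    B = D := by
  obtain ⟨b1, b2, b3, b4⟩ := hB
  obtain ⟨d1, d2, d3, d4⟩ := hD
  have h1 : A * B = A * D := by
    calc A * B = (A * D) * (A * B) := by rw [← Matrix.mul_assoc, d1]
      _ = (A * D)ᵀ * (A * B)ᵀ := by rw [d3, b3]
      _ = ((A * B * A) * D)ᵀ := by rw [← Matrix.transpose_mul, Matrix.mul_assoc (A * B)]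
      _ = A * D := by rw [b1, d3]
  have h2 : B * A = D * A := by
    calc B * A = (B * A) * (D * A) := by
            rw [Matrix.mul_assoc, ← Matrix.mul_assoc A, d1]
      _ = (B * A)ᵀ * (D * A)ᵀ := by rw [d4, b4]
      _ = (D * (A * B * A))ᵀ := by
            rw [← Matrix.transpose_mul, Matrix.mul_assoc A, Matrix.mul_assoc D]
      _ = D * A := by rw [b1, d4]
  calc B = B * A * B := b2.symm
    _ = D * A * B := by rw [h2]
    _ = D * A * D := by rw [Matrix.mul_assoc, h1, ← Matrix.mul_assoc]
    _ = D := d2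

/-- Existence through the spectral theorem: invert the nonzero eigenvalues. -/
lemma exists_isMoorePenrose {n : ℕ} {A : Matrix (Fin n) (Fin n) ℝ} (hA : Aᵀ = A) :
    ∃ B, IsMoorePenrose A B := by
  have hH : A.IsHermitian := by
    rw [Matrix.IsHermitian, Matrix.conjTranspose_eq_transpose_of_trivial, hA]
  obtain ⟨U, d, hU, hAd⟩ : ∃ (U : Matrix (Fin n) (Fin n) ℝ) (d : Fin n → ℝ),
      Uᵀ * U = 1 ∧ A = U * diagonal d * Uᵀ := by
    refine ⟨hH.eigenvectorUnitary, hH.eigenvalues, ?_, ?_⟩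
    · have := Unitary.coe_star_mul_self hH.eigenvectorUnitary
      rwa [Matrix.star_eq_conjTranspose, Matrix.conjTranspose_eq_transpose_of_trivial] at this
    · have := hH.spectral_theorem
      rw [Unitary.conjStarAlgAut_apply, Matrix.star_eq_conjTranspose,
        Matrix.conjTranspose_eq_transpose_of_trivial] at this
      exact this
  have key : ∀ e f : Fin n → ℝ, (U * diagonal e * Uᵀ) * (U * diagonal f * Uᵀ)
      = U * diagonal (fun i => e i * f i) * Uᵀ := by
    intro e f
    calc _ = U * diagonal e * (Uᵀ * U) * diagonal f * Uᵀ := by simp only [Matrix.mul_assoc]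
      _ = _ := by rw [hU, Matrix.mul_one, Matrix.mul_assoc U, diagonal_mul_diagonal]
  have ksym : ∀ e : Fin n → ℝ, (U * diagonal e * Uᵀ)ᵀ = U * diagonal e * Uᵀ := by
    intro e
    simp [Matrix.transpose_mul, Matrix.mul_assoc]
  refine ⟨U * diagonal (fun i => (d i)⁻¹) * Uᵀ, ?_⟩
  subst hAd
  refine ⟨?_, ?_, ?_, ?_⟩
  · rw [key, key]; simp
  · have e : (fun i => (d i)⁻¹ * d i * (d i)⁻¹) = fun i => (d i)⁻¹ := by
      funext i
      by_cases hi : d i = 0 <;> simp [hi]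
    rw [key, key, e]
  · rw [key, ksym]
  · rw [key, ksym]

lemma pinv_spec {n : ℕ} {A : Matrix (Fin n) (Fin n) ℝ} (hA : Aᵀ = A) :
    IsMoorePenrose A (pinv A) := by
  have h := exists_isMoorePenrose hA
  rw [pinv, dif_pos h]
  exact h.choose_spec

lemma pinv_symm {n : ℕ} {A : Matrix (Fin n) (Fin n) ℝ} (hA : Aᵀ = A) :
    (pinv A)ᵀ = pinv A := by
  have h := pinv_spec hA
  refine IsMoorePenrose.unique (A := A) ?_ h
  obtain ⟨h1, h2, h3, h4⟩ := h
  have e1 : A * (pinv A)ᵀ = pinv A * A := by rw [← h4, Matrix.transpose_mul, hA]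
  have e2 : (pinv A)ᵀ * A = A * pinv A := by rw [← h3, Matrix.transpose_mul, hA]
  refine ⟨?_, ?_, ?_, ?_⟩
  · have := congrArg Matrix.transpose h1
    rw [Matrix.transpose_mul, Matrix.transpose_mul, hA] at this
    rw [Matrix.mul_assoc]
    exact this
  · have := congrArg Matrix.transpose h2
    rw [Matrix.transpose_mul, Matrix.transpose_mul, hA] at this
    rw [Matrix.mul_assoc]
    exact this
  · rw [e1, h4]
  · rw [e2, h3]

/-! ### The action of matrices on Euclidean space -/

section MatVec

variable {a b c : ℕ}

lemma matVec_mul (A : Matrix (Fin a) (Fin b) ℝ) (B : Matrix (Fin b) (Fin c) ℝ)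
    (v : EuclideanSpace ℝ (Fin c)) : matVec (A * B) v = matVec A (matVec B v) := by
  simp [matVec, Matrix.toLpLin_apply]

lemma matVec_add (A : Matrix (Fin a) (Fin b) ℝ) (v w : EuclideanSpace ℝ (Fin b)) :
    matVec A (v + w) = matVec A v + matVec A w := map_add _ _ _

lemma matVec_sub (A : Matrix (Fin a) (Fin b) ℝ) (v w : EuclideanSpace ℝ (Fin b)) :
    matVec A (v - w) = matVec A v - matVec A w := map_sub _ _ _

lemma matVec_smul (A : Matrix (Fin a) (Fin b) ℝ) (t : ℝ) (v : EuclideanSpace ℝ (Fin b)) :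
    matVec A (t • v) = t • matVec A v := map_smul _ _ _

lemma add_matVec (A B : Matrix (Fin a) (Fin b) ℝ) (v : EuclideanSpace ℝ (Fin b)) :
    matVec (A + B) v = matVec A v + matVec B v := by simp [matVec]

lemma sub_matVec (A B : Matrix (Fin a) (Fin b) ℝ) (v : EuclideanSpace ℝ (Fin b)) :
    matVec (A - B) v = matVec A v - matVec B v := by simp [matVec]

lemma inner_matVec (A : Matrix (Fin a) (Fin b) ℝ) (v : EuclideanSpace ℝ (Fin b))
    (w : EuclideanSpace ℝ (Fin a)) : ⟪matVec A v, w⟫ = ⟪v, matVec Aᵀ w⟫ := by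
  simp only [matVec, Matrix.toLpLin_apply, EuclideanSpace.inner_eq_star_dotProduct]
  simp [Matrix.dotProduct_mulVec, Matrix.vecMul_transpose, dotProduct_comm]

lemma inner_matVec_transpose (A : Matrix (Fin a) (Fin b) ℝ) (v : EuclideanSpace ℝ (Fin a))
    (w : EuclideanSpace ℝ (Fin b)) : ⟪matVec Aᵀ v, w⟫ = ⟪v, matVec A w⟫ := by
  rw [inner_matVec, Matrix.transpose_transpose]

lemma inner_matVec_symm {A : Matrix (Fin a) (Fin a) ℝ} (hA : Aᵀ = A)
    (v w : EuclideanSpace ℝ (Fin a)) : ⟪matVec A v, w⟫ = ⟪matVec A w, v⟫ := by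
  rw [inner_matVec, hA, real_inner_comm]

lemma Matrix.PosDef.inner_matVec_nonneg {A : Matrix (Fin a) (Fin a) ℝ} (hA : A.PosDef)
    (v : EuclideanSpace ℝ (Fin a)) : 0 ≤ ⟪matVec A v, v⟫ := by
  have h := hA.posSemidef.dotProduct_mulVec_nonneg v.ofLp
  simpa [matVec, Matrix.toLpLin_apply, EuclideanSpace.inner_eq_star_dotProduct,
    dotProduct_comm] using h

lemma Matrix.PosDef.transpose_eq {A : Matrix (Fin a) (Fin a) ℝ} (hA : A.PosDef) : Aᵀ = A := by
  have h := hA.isHermitian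
  rwa [Matrix.IsHermitian, Matrix.conjTranspose_eq_transpose_of_trivial] at h

end MatVec

/-! ### Quadratic polynomials bounded below -/

section Quadratic

variable {n : ℕ} {P : Matrix (Fin n) (Fin n) ℝ}

lemma bounded_below_psd {b : EuclideanSpace ℝ (Fin n)} {c : ℝ}
    (h : ∀ x, 0 ≤ ⟪matVec P x, x⟫ - 2 * ⟪b, x⟫ + c) (x : EuclideanSpace ℝ (Fin n)) :
    0 ≤ ⟪matVec P x, x⟫ := by
  by_contra! hneg
  have ht : ∀ t : ℝ, 0 ≤ t ^ 2 * ⟪matVec P x, x⟫ + c := by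
    intro t
    have h1 := h (t • x)
    have h2 := h ((-t) • x)
    simp only [matVec_smul, inner_smul_left, inner_smul_right, RCLike.conj_to_real] at h1 h2
    nlinarith
  have hc := ht 0
  -- the value at `t = 1 + s` is below `s * (P x, x) + c = -1`
  set A := ⟪matVec P x, x⟫
  have hs : (c + 1) / (-A) * A = -(c + 1) := by
    rw [div_neg, neg_mul, div_mul_cancel₀ _ hneg.ne]
  have hs0 : 0 ≤ (c + 1) / (-A) := div_nonneg (by linarith) (by linarith)
  have h1 := ht (1 + (c + 1) / (-A))
  generalize (c + 1) / (-A) = s at *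
  nlinarith [mul_nonneg (by nlinarith : 0 ≤ 1 + s + s ^ 2) (neg_nonneg.2 hneg.le)]

/-- If `P⁺ P b = b` with `P` symmetric, then `b` lies in the range of `P` as well. -/
lemma matVec_pinv_of_fixed (hP : Pᵀ = P) {b : EuclideanSpace ℝ (Fin n)}
    (h : matVec (pinv P * P) b = b) : matVec P (matVec (pinv P) b) = b := by
  have h4 := (pinv_spec hP).2.2.2
  rw [← matVec_mul]
  rwa [← h4, Matrix.transpose_mul, hP, pinv_symm hP] at h

/-- The polynomial is affine along `w = b - P⁺ P b`, which lies in the kernel of `P`, so `w` is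
orthogonal to `b`; as `P⁺ P` is an orthogonal projection, `w = 0`. -/
lemma bounded_below_range (hP : Pᵀ = P) {b : EuclideanSpace ℝ (Fin n)} {c : ℝ}
    (h : ∀ x, 0 ≤ ⟪matVec P x, x⟫ - 2 * ⟪b, x⟫ + c) :
    matVec P (matVec (pinv P) b) = b := by
  obtain ⟨h1, h2, h3, h4⟩ := pinv_spec hP
  apply matVec_pinv_of_fixed hP
  set w := b - matVec (pinv P * P) b with hw
  have hPw : matVec P w = 0 := by
    rw [hw, matVec_sub, ← matVec_mul, ← Matrix.mul_assoc, h1, sub_self]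
  have hbw : ⟪b, w⟫ = 0 := by
    by_contra hne
    have := h (((c + 1) / (2 * ⟪b, w⟫)) • w)
    simp only [matVec_smul, hPw, smul_zero, inner_zero_left, inner_smul_right] at this
    have e : 2 * ((c + 1) / (2 * ⟪b, w⟫) * ⟪b, w⟫) = c + 1 := by field_simp
    linarith
  have hww : ⟪w, w⟫ = 0 := by
    have : ⟪matVec (pinv P * P) b, w⟫ = 0 := by
      rw [inner_matVec, h4, matVec_mul, hPw]
      simp [matVec]
    rw [hw, inner_sub_left, ← hw, hbw, this, sub_zero]
  rw [inner_self_eq_zero] at hww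
  exact (sub_eq_zero.1 hww).symm

lemma complete_square (hP : Pᵀ = P) {b : EuclideanSpace ℝ (Fin n)}
    (hb : matVec P (matVec (pinv P) b) = b) (x : EuclideanSpace ℝ (Fin n)) :
    ⟪matVec P x, x⟫ - 2 * ⟪b, x⟫ =
      ⟪matVec P (x - matVec (pinv P) b), x - matVec (pinv P) b⟫ - ⟪matVec (pinv P) b, b⟫ := by
  rw [matVec_sub, hb]
  simp only [inner_sub_left, inner_sub_right]
  rw [inner_matVec_symm hP x (matVec (pinv P) b), hb, real_inner_comm b (matVec (pinv P) b)]
  ring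

lemma cauchy_schwarz_form (hP : Pᵀ = P) (hpsd : ∀ x, 0 ≤ ⟪matVec P x, x⟫)
    (w e : EuclideanSpace ℝ (Fin n)) :
    ⟪matVec P w, e⟫ ^ 2 ≤ ⟪matVec P w, w⟫ * ⟪matVec P e, e⟫ := by
  have h : ∀ t : ℝ, 0 ≤ ⟪matVec P w, w⟫ * (t * t) + (2 * ⟪matVec P w, e⟫) * t
      + ⟪matVec P e, e⟫ := by
    intro t
    have := hpsd (t • w + e)
    simp only [matVec_add, matVec_smul, inner_add_left, inner_add_right, inner_smul_left,
      inner_smul_right, RCLike.conj_to_real, inner_matVec_symm hP e w] at this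
    linarith
  have := discrim_le_zero h
  rw [discrim] at this
  nlinarith

end Quadratic

/-! ### The value function -/

section Value

variable {m n p : ℕ} (F C : ℕ → Matrix (Fin m) (Fin n) ℝ)
    (Hm : ℕ → Matrix (Fin p) (Fin n) ℝ) (S0 : Matrix (Fin m) (Fin m) ℝ)
    (S : ℕ → Matrix (Fin m) (Fin m) ℝ) (R : ℕ → Matrix (Fin p) (Fin p) ℝ)
    (y : ℕ → EuclideanSpace ℝ (Fin p))

/-- The left-hand side of the constraint defining the a posteriori set up to time `N`. -/
noncomputable def cost (N : ℕ) (x : ℕ → EuclideanSpace ℝ (Fin n)) : ℝ :=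
  ⟪matVec S0 (matVec (F 0) (x 0)), matVec (F 0) (x 0)⟫ +
      (∑ i ∈ Finset.range N,
        ⟪matVec (S i) (matVec (F (i+1)) (x (i+1)) - matVec (C i) (x i)),
          matVec (F (i+1)) (x (i+1)) - matVec (C i) (x i)⟫) +
      (∑ i ∈ Finset.range (N+1),
        ⟪matVec (R i) (y i - matVec (Hm i) (x i)),
          y i - matVec (Hm i) (x i)⟫)

/-- The candidate for the least cost among sequences with `x_N = z`. -/
noncomputable def value (N : ℕ) (z : EuclideanSpace ℝ (Fin n)) : ℝ :=
  ⟪matVec (Qmat F C Hm S0 S R N) z, z⟫ - 2 * ⟪rvec F C Hm S0 S R y N, z⟫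
    + alphaNum F C Hm S0 S R y N

/-- The right-hand side `b = r_k + C_k' S_k F_{k+1} z` of the equation `P_k x = b` for the optimal
predecessor `x` of the state `z`. -/
noncomputable def bvec (k : ℕ) (z : EuclideanSpace ℝ (Fin n)) : EuclideanSpace ℝ (Fin n) :=
  rvec F C Hm S0 S R y k + matVec (C k)ᵀ (matVec (S k) (matVec (F (k+1)) z))

lemma cost_succ (k : ℕ) (x : ℕ → EuclideanSpace ℝ (Fin n)) :
    cost F C Hm S0 S R y (k+1) x = cost F C Hm S0 S R y k x +
      ⟪matVec (S k) (matVec (F (k+1)) (x (k+1)) - matVec (C k) (x k)),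
          matVec (F (k+1)) (x (k+1)) - matVec (C k) (x k)⟫ +
      ⟪matVec (R (k+1)) (y (k+1) - matVec (Hm (k+1)) (x (k+1))),
          y (k+1) - matVec (Hm (k+1)) (x (k+1))⟫ := by
  unfold cost
  rw [Finset.sum_range_succ _ k, Finset.sum_range_succ _ (k+1)]
  ring

lemma cost_congr (k : ℕ) {x x' : ℕ → EuclideanSpace ℝ (Fin n)} (h : ∀ i ≤ k, x i = x' i) :
    cost F C Hm S0 S R y k x = cost F C Hm S0 S R y k x' := by
  unfold cost
  rw [h 0 (Nat.zero_le k)]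
  congr 1
  · congr 1
    refine Finset.sum_congr rfl fun i hi => ?_
    rw [Finset.mem_range] at hi
    rw [h i (by omega), h (i+1) (by omega)]
  · refine Finset.sum_congr rfl fun i hi => ?_
    rw [Finset.mem_range] at hi
    rw [h i (by omega)]

variable {S0 S R}

lemma cost_nonneg (hS0 : S0.PosDef) (hS : ∀ k, (S k).PosDef) (hR : ∀ k, (R k).PosDef)
    (k : ℕ) (x : ℕ → EuclideanSpace ℝ (Fin n)) : 0 ≤ cost F C Hm S0 S R y k x :=
  add_nonneg (add_nonneg (hS0.inner_matVec_nonneg _)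
    (Finset.sum_nonneg fun i _ => (hS i).inner_matVec_nonneg _))
    (Finset.sum_nonneg fun i _ => (hR i).inner_matVec_nonneg _)

lemma Qmat_symm (hS0 : S0.PosDef) (hS : ∀ k, (S k).PosDef) (hR : ∀ k, (R k).PosDef) (k : ℕ) :
    (Qmat F C Hm S0 S R k)ᵀ = Qmat F C Hm S0 S R k := by
  induction k with
  | zero =>
    simp [Qmat, Matrix.transpose_mul, hS0.transpose_eq, (hR 0).transpose_eq, Matrix.mul_assoc]
  | succ k ih =>
    have hP : (Qmat F C Hm S0 S R k + (C k)ᵀ * S k * C k)ᵀ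
        = Qmat F C Hm S0 S R k + (C k)ᵀ * S k * C k := by
      simp [Matrix.transpose_mul, ih, (hS k).transpose_eq, Matrix.mul_assoc]
    have hp := pinv_symm hP
    rw [Qmat]
    generalize pinv (Qmat F C Hm S0 S R k + (C k)ᵀ * S k * C k) = B at hp
    simp [Matrix.transpose_mul, (hS k).transpose_eq, (hR (k+1)).transpose_eq, hp,
      Matrix.mul_assoc]

lemma Pmat_symm (hS0 : S0.PosDef) (hS : ∀ k, (S k).PosDef) (hR : ∀ k, (R k).PosDef) (k : ℕ) :
    (Pmat F C Hm S0 S R k)ᵀ = Pmat F C Hm S0 S R k := by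
  simp [Pmat, Matrix.transpose_mul, Qmat_symm F C Hm hS0 hS hR, (hS k).transpose_eq,
    Matrix.mul_assoc]

lemma value_zero (hR : ∀ k, (R k).PosDef) (x : ℕ → EuclideanSpace ℝ (Fin n)) :
    cost F C Hm S0 S R y 0 x = value F C Hm S0 S R y 0 (x 0) := by
  simp only [cost, value, Qmat, rvec, alphaNum, Finset.range_zero, Finset.sum_empty, zero_add,
    Finset.sum_range_one, add_matVec, matVec_mul, matVec_sub, inner_add_left, inner_sub_left,
    inner_sub_right, inner_matVec_transpose]
  rw [inner_matVec_symm (hR 0).transpose_eq (matVec (Hm 0) (x 0)) (y 0)]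
  ring

/-- The cost of the predecessor `x` of `z`, without the observation term, as a quadratic
polynomial in `x`. -/
lemma value_add_transition (hS : ∀ k, (S k).PosDef) (k : ℕ) (x z : EuclideanSpace ℝ (Fin n)) :
    value F C Hm S0 S R y k x +
      ⟪matVec (S k) (matVec (F (k+1)) z - matVec (C k) x),
          matVec (F (k+1)) z - matVec (C k) x⟫ =
      ⟪matVec (Pmat F C Hm S0 S R k) x, x⟫ - 2 * ⟪bvec F C Hm S0 S R y k z, x⟫ +
        (alphaNum F C Hm S0 S R y k +
          ⟪matVec (S k) (matVec (F (k+1)) z), matVec (F (k+1)) z⟫) := by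
  simp only [value, Pmat, bvec, add_matVec, matVec_mul, matVec_sub, inner_add_left,
    inner_sub_left, inner_sub_right, inner_matVec_transpose]
  rw [inner_matVec_symm (hS k).transpose_eq (matVec (C k) x) (matVec (F (k+1)) z)]
  ring

lemma value_succ (hS0 : S0.PosDef) (hS : ∀ k, (S k).PosDef) (hR : ∀ k, (R k).PosDef)
    (k : ℕ) (z : EuclideanSpace ℝ (Fin n)) :
    value F C Hm S0 S R y (k+1) z =
      alphaNum F C Hm S0 S R y k + ⟪matVec (S k) (matVec (F (k+1)) z), matVec (F (k+1)) z⟫ -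
      ⟪matVec (pinv (Pmat F C Hm S0 S R k)) (bvec F C Hm S0 S R y k z),
        bvec F C Hm S0 S R y k z⟫ +
      ⟪matVec (R (k+1)) (y (k+1) - matVec (Hm (k+1)) z), y (k+1) - matVec (Hm (k+1)) z⟫ := by
  have hp := pinv_symm (Pmat_symm F C Hm hS0 hS hR k)
  have hS' := (hS k).transpose_eq
  simp only [value, Qmat, rvec, alphaNum, bvec]
  rw [← Pmat]
  simp only [add_matVec, sub_matVec, matVec_mul, matVec_add, matVec_sub, inner_add_left,
    inner_sub_left, inner_add_right, inner_sub_right, inner_matVec_transpose]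
  rw [inner_matVec_symm (hR (k+1)).transpose_eq (matVec (Hm (k+1)) z) (y (k+1)),
    inner_matVec_symm hp (matVec (C k)ᵀ _) (rvec F C Hm S0 S R y k)]
  have e : ∀ u v, ⟪matVec (S k) (matVec (C k) u), v⟫
      = ⟪u, matVec (C k)ᵀ (matVec (S k) v)⟫ := by
    intro u v
    rw [inner_matVec, hS', inner_matVec]
  simp only [e]
  ring

/-- Bellman's equation, with the deficit of a predecessor `x` as a completed square. -/
lemma step_identity (hS0 : S0.PosDef) (hS : ∀ k, (S k).PosDef) (hR : ∀ k, (R k).PosDef)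
    (k : ℕ) (hV : ∀ x, 0 ≤ value F C Hm S0 S R y k x) (x z : EuclideanSpace ℝ (Fin n)) :
    value F C Hm S0 S R y k x +
      ⟪matVec (S k) (matVec (F (k+1)) z - matVec (C k) x),
          matVec (F (k+1)) z - matVec (C k) x⟫ +
      ⟪matVec (R (k+1)) (y (k+1) - matVec (Hm (k+1)) z), y (k+1) - matVec (Hm (k+1)) z⟫ =
    value F C Hm S0 S R y (k+1) z +
      ⟪matVec (Pmat F C Hm S0 S R k)
          (x - matVec (pinv (Pmat F C Hm S0 S R k)) (bvec F C Hm S0 S R y k z)),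
        x - matVec (pinv (Pmat F C Hm S0 S R k)) (bvec F C Hm S0 S R y k z)⟫ ∧
    ∀ u, 0 ≤ ⟪matVec (Pmat F C Hm S0 S R k) u, u⟫ := by
  have hP := Pmat_symm F C Hm hS0 hS hR k
  have hb : ∀ x, 0 ≤ ⟪matVec (Pmat F C Hm S0 S R k) x, x⟫ - 2 * ⟪bvec F C Hm S0 S R y k z, x⟫ +
        (alphaNum F C Hm S0 S R y k +
          ⟪matVec (S k) (matVec (F (k+1)) z), matVec (F (k+1)) z⟫) := by
    intro x
    rw [← value_add_transition F C Hm y hS]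
    exact add_nonneg (hV x) ((hS k).inner_matVec_nonneg _)
  refine ⟨?_, bounded_below_psd hb⟩
  rw [value_add_transition F C Hm y hS, complete_square hP (bounded_below_range hP hb),
    value_succ F C Hm y hS0 hS hR]
  ring

/-- The value is attained by some sequence ending in `z`, and it is a lower bound for the cost.
The two are proved together, because attainment makes the value nonnegative, which the
induction step of both needs. -/
lemma value_spec (hS0 : S0.PosDef) (hS : ∀ k, (S k).PosDef) (hR : ∀ k, (R k).PosDef) (k : ℕ) :
    (∀ x, value F C Hm S0 S R y k (x k) ≤ cost F C Hm S0 S R y k x) ∧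
    ∀ z, ∃ x, x k = z ∧ cost F C Hm S0 S R y k x = value F C Hm S0 S R y k z := by
  induction k with
  | zero =>
    exact ⟨fun x => (value_zero F C Hm y hR x).ge,
      fun z => ⟨fun _ => z, rfl, value_zero F C Hm y hR _⟩⟩
  | succ k ih =>
    obtain ⟨ih1, ih2⟩ := ih
    have hV : ∀ z, 0 ≤ value F C Hm S0 S R y k z := by
      intro z
      obtain ⟨x, -, hx⟩ := ih2 z
      rw [← hx]
      exact cost_nonneg F C Hm y hS0 hS hR k x
    constructor
    · intro x
      obtain ⟨h1, h2⟩ := step_identity F C Hm y hS0 hS hR k hV (x k) (x (k+1))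
      rw [cost_succ]
      linarith [h2 (x k - matVec (pinv (Pmat F C Hm S0 S R k))
        (bvec F C Hm S0 S R y k (x (k+1)))), ih1 x]
    · intro z
      obtain ⟨x, hxk, hx⟩ := ih2
        (matVec (pinv (Pmat F C Hm S0 S R k)) (bvec F C Hm S0 S R y k z))
      obtain ⟨h1, -⟩ := step_identity F C Hm y hS0 hS hR k hV (x k) z
      refine ⟨Function.update x (k+1) z, by simp, ?_⟩
      have hc : cost F C Hm S0 S R y k (Function.update x (k+1) z)
          = cost F C Hm S0 S R y k x := by
        refine cost_congr F C Hm S0 S R y k fun i hi => ?_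
        rw [Function.update_of_ne (by omega)]
      rw [cost_succ, hc, Function.update_self, Function.update_of_ne (by omega), hx, ← hxk, h1,
        ← hxk, sub_self]
      simp

lemma value_le_cost (hS0 : S0.PosDef) (hS : ∀ k, (S k).PosDef) (hR : ∀ k, (R k).PosDef) (k : ℕ)
    (x : ℕ → EuclideanSpace ℝ (Fin n)) :
    value F C Hm S0 S R y k (x k) ≤ cost F C Hm S0 S R y k x :=
  (value_spec F C Hm y hS0 hS hR k).1 x

lemma exists_cost_eq_value (hS0 : S0.PosDef) (hS : ∀ k, (S k).PosDef) (hR : ∀ k, (R k).PosDef)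
    (k : ℕ) (z : EuclideanSpace ℝ (Fin n)) :
    ∃ x, x k = z ∧ cost F C Hm S0 S R y k x = value F C Hm S0 S R y k z :=
  (value_spec F C Hm y hS0 hS hR k).2 z

lemma value_nonneg (hS0 : S0.PosDef) (hS : ∀ k, (S k).PosDef) (hR : ∀ k, (R k).PosDef)
    (k : ℕ) (z : EuclideanSpace ℝ (Fin n)) : 0 ≤ value F C Hm S0 S R y k z := by
  obtain ⟨x, -, hx⟩ := exists_cost_eq_value F C Hm y hS0 hS hR k z
  rw [← hx]
  exact cost_nonneg F C Hm y hS0 hS hR k x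

end Value

/-! ### The minimax estimate -/

/-!
**Theorem 4 (error formula and estimate):** if `Q_N⁺ Q_N ℓ = ℓ` then
`σ̂(ℓ,N) = [1 − α_N + (Q_N⁺ r_N, r_N)]^{1/2} (Q_N⁺ ℓ, ℓ)^{1/2}` and the minimax
a posteriori estimation of `(ℓ, x_N)` is `(ℓ, Q_N⁺ r_N)`.
-/

/-- **Theorem 4 (minimax a posteriori error and estimation).** -/
theorem minimax_error_and_estimation_discrete {m n p : ℕ}
    (F C : ℕ → Matrix (Fin m) (Fin n) ℝ)
    (Hm : ℕ → Matrix (Fin p) (Fin n) ℝ)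
    (S0 : Matrix (Fin m) (Fin m) ℝ) (hS0 : S0.PosDef)
    (S : ℕ → Matrix (Fin m) (Fin m) ℝ) (hS : ∀ k, (S k).PosDef)
    (R : ℕ → Matrix (Fin p) (Fin p) ℝ) (hR : ∀ k, (R k).PosDef)
    (y : ℕ → EuclideanSpace ℝ (Fin p)) (N : ℕ)
    (hne : (GySeq F C Hm S0 S R y N).Nonempty)
    (ℓ : EuclideanSpace ℝ (Fin n))
    (hℓ : matVec (pinv (Qmat F C Hm S0 S R N) * Qmat F C Hm S0 S R N) ℓ = ℓ) :
    -- `σ̂(ℓ,N) = [1 − α_N + (Q_N⁺ r_N, r_N)]^{1/2} (Q_N⁺ ℓ, ℓ)^{1/2}` ...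
    sigmaHatSeq F C Hm S0 S R y N ℓ =
      ENNReal.ofReal
        (Real.sqrt (1 - alphaNum F C Hm S0 S R y N +
            ⟪matVec (pinv (Qmat F C Hm S0 S R N)) (rvec F C Hm S0 S R y N),
              rvec F C Hm S0 S R y N⟫) *
          Real.sqrt ⟪matVec (pinv (Qmat F C Hm S0 S R N)) ℓ, ℓ⟫) ∧
    -- ... and `a = (ℓ, Q_N⁺ r_N)` attains `inf_a sup_{𝓖_y} |(ℓ, x_N) − a|`
    ∀ a : ℝ,
      (⨆ (x : ℕ → EuclideanSpace ℝ (Fin n))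
          (_ : x ∈ GySeq F C Hm S0 S R y N),
        ENNReal.ofReal |⟪ℓ, x N⟫ -
          ⟪ℓ, matVec (pinv (Qmat F C Hm S0 S R N)) (rvec F C Hm S0 S R y N)⟫|)
      ≤ ⨆ (x : ℕ → EuclideanSpace ℝ (Fin n))
          (_ : x ∈ GySeq F C Hm S0 S R y N),
          ENNReal.ofReal |⟪ℓ, x N⟫ - a| := by
  set Q := Qmat F C Hm S0 S R N with hQdef
  set r := rvec F C Hm S0 S R y N with hrdef
  set α := alphaNum F C Hm S0 S R y N with hαdef
  set zh := matVec (pinv Q) r with hzh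
  set w := matVec (pinv Q) ℓ with hw
  set c := 1 - α + ⟪zh, r⟫ with hc
  set d := ⟪w, ℓ⟫ with hd
  have hQ : Qᵀ = Q := Qmat_symm F C Hm hS0 hS hR N
  have hVn : ∀ z, 0 ≤ ⟪matVec Q z, z⟫ - 2 * ⟪r, z⟫ + α := value_nonneg F C Hm y hS0 hS hR N
  have hpsd := bounded_below_psd hVn
  have hsq := complete_square hQ (bounded_below_range hQ hVn)
  have hQw : matVec Q w = ℓ := matVec_pinv_of_fixed hQ hℓ
  have hdw : ⟪matVec Q w, w⟫ = d := by rw [hQw, real_inner_comm]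
  have hd0 : 0 ≤ d := hdw ▸ hpsd w
  have hmem : ∀ x ∈ GySeq F C Hm S0 S R y N, ⟪matVec Q (x N - zh), x N - zh⟫ ≤ c := by
    intro x hx
    have h1 : ⟪matVec Q (x N), x N⟫ - 2 * ⟪r, x N⟫ + α ≤ 1 :=
      (value_le_cost F C Hm y hS0 hS hR N x).trans hx
    rw [hsq] at h1
    linarith
  have hmem' : ∀ e, ⟪matVec Q e, e⟫ ≤ c → ∃ x ∈ GySeq F C Hm S0 S R y N, x N = zh + e := by
    intro e he
    obtain ⟨x, hx, hJ⟩ := exists_cost_eq_value F C Hm y hS0 hS hR N (zh + e)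
    refine ⟨x, ?_, hx⟩
    have h1 : cost F C Hm S0 S R y N x ≤ 1 := by
      rw [hJ]
      change ⟪matVec Q (zh + e), zh + e⟫ - 2 * ⟪r, zh + e⟫ + α ≤ 1
      rw [hsq, ← hzh, add_sub_cancel_left]
      linarith
    exact h1
  have hc0 : 0 ≤ c := by
    obtain ⟨x, hx⟩ := hne
    exact (hpsd _).trans (hmem x hx)
  have hupper : (⨆ (x : ℕ → EuclideanSpace ℝ (Fin n)) (_ : x ∈ GySeq F C Hm S0 S R y N),
      ENNReal.ofReal |⟪ℓ, x N⟫ - ⟪ℓ, zh⟫|) ≤ ENNReal.ofReal (√c * √d) := by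
    refine iSup₂_le fun x hx => ENNReal.ofReal_le_ofReal ?_
    rw [← inner_sub_right, ← Real.sqrt_mul hc0]
    apply Real.abs_le_sqrt
    calc ⟪ℓ, x N - zh⟫ ^ 2 ≤ ⟪matVec Q w, w⟫ * ⟪matVec Q (x N - zh), x N - zh⟫ := by
          conv_lhs => rw [← hQw]
          exact cauchy_schwarz_form hQ hpsd _ _
      _ ≤ d * c := by rw [hdw]; exact mul_le_mul_of_nonneg_left (hmem x hx) hd0
      _ = c * d := mul_comm _ _
  -- the extreme points are `zh ± t w`; if `d = 0` then `t = 0`, and both deviations vanish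
  have hext : ∀ t : ℝ, |t| ≤ √c / √d →
      ∃ x ∈ GySeq F C Hm S0 S R y N, ⟪ℓ, x N⟫ = ⟪ℓ, zh⟫ + t * d := by
    intro t ht
    obtain ⟨x, hx, hxN⟩ := hmem' (t • w) (by
      simp only [matVec_smul, inner_smul_left, inner_smul_right, RCLike.conj_to_real, hdw]
      have h1 : t ^ 2 ≤ c / d := by
        have := pow_le_pow_left₀ (abs_nonneg t) ht 2
        rwa [sq_abs, div_pow, Real.sq_sqrt hc0, Real.sq_sqrt hd0] at this
      calc t * (t * d) = t ^ 2 * d := by ring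
        _ ≤ c / d * d := mul_le_mul_of_nonneg_right h1 hd0
        _ ≤ c := by
            rcases eq_or_ne d 0 with h0 | h0
            · simpa [h0] using hc0
            · rw [div_mul_cancel₀ _ h0])
    refine ⟨x, hx, ?_⟩
    rw [hxN, inner_add_right, inner_smul_right, real_inner_comm w ℓ]
  have htd : √c / √d * d = √c * √d := by
    conv_lhs => rw [div_mul_eq_mul_div, mul_div_assoc, Real.div_sqrt]
  have ht0 : 0 ≤ √c / √d := by positivity
  have hlower : ∀ a : ℝ, ENNReal.ofReal (√c * √d) ≤
      ⨆ (x : ℕ → EuclideanSpace ℝ (Fin n)) (_ : x ∈ GySeq F C Hm S0 S R y N),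
        ENNReal.ofReal |⟪ℓ, x N⟫ - a| := by
    intro a
    rcases le_total a ⟪ℓ, zh⟫ with h | h
    · obtain ⟨x, hx, hxN⟩ := hext (√c / √d) (abs_of_nonneg ht0).le
      refine le_iSup₂_of_le x hx (ENNReal.ofReal_le_ofReal ?_)
      rw [hxN, htd]
      refine le_trans ?_ (le_abs_self _)
      linarith
    · obtain ⟨x, hx, hxN⟩ := hext (-(√c / √d)) (by rw [abs_neg, abs_of_nonneg ht0])
      refine le_iSup₂_of_le x hx (ENNReal.ofReal_le_ofReal ?_)
      rw [hxN, neg_mul, htd]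
      refine le_trans ?_ (neg_le_abs _)
      linarith
  refine ⟨le_antisymm ((iInf_le _ ⟪ℓ, zh⟫).trans hupper) (le_iInf hlower), fun a => ?_⟩
  exact hupper.trans (hlower a)
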